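/- Let a > 0 be real and let A, B, C be complex numbers with Re(C) > (a²/4)((Im A)² + (Im B)²). Then ∫_0^∞ ∫_ℝ ∫_ℝ ((x² + y²)/t²) · exp(−C t − (a²/(4t))(x + tA)² − (a²/(4t))(y + tB)²) dx dy dt = (4π/(a² C)) · (4/a² + (A² + B²)/C), the triple integral being absolutely convergent. In particular, if moreover C = 1 − (a²/4)(A² + B²), the value equals 16π/(a⁴ C²). -/

import Mathlib

open MeasureTheory Complex Real Filter

/-!
For fixed `t > 0` the spatial integral is a second moment of a Gaussian in `(x, y)` with complex
centre `(-tA, -tB)`, given by the same formula as for a real centre. It is therefore an affine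
function of `t` times `exp (-C t)`, and only a Laplace transform remains.

Absolute convergence comes from the same computation: the norm of the integrand is the integrand
with `A`, `B`, `C` replaced by `Re A`, `Re B`, `Re C - (a² / 4) ((Im A)² + (Im B)²)`, and the last
of these real parameters is positive.
-/

section GaussianMoments

variable {b : ℂ}

lemma integrable_cexp_neg_mul_sq_add (hb : 0 < b.re) (z : ℂ) :
    Integrable fun x : ℝ ↦ cexp (-b * (x + z) ^ 2) := by
  refine (integrable_cexp_quadratic hb (-2 * b * z) (-b * z ^ 2)).congr (ae_of_all _ fun x ↦ ?_)
  ring_nf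

lemma integral_cexp_neg_mul_sq_add (hb : 0 < b.re) (z : ℂ) :
    ∫ x : ℝ, cexp (-b * (x + z) ^ 2) = (π / b) ^ (1 / 2 : ℂ) := by
  calc ∫ x : ℝ, cexp (-b * (x + z) ^ 2)
    _ = ∫ x : ℝ, cexp (-b * x ^ 2 + (-2 * b * z) * x + -b * z ^ 2) := by
      congr with x; ring_nf
    _ = (π / b) ^ (1 / 2 : ℂ) * cexp (-b * z ^ 2 - (-2 * b * z) ^ 2 / (4 * -b)) := by
      rw [integral_cexp_quadratic (by simpa using hb), neg_neg]
    _ = (π / b) ^ (1 / 2 : ℂ) := by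
      rw [show -b * z ^ 2 - (-2 * b * z) ^ 2 / (4 * -b) = 0 by field, Complex.exp_zero, mul_one]

lemma abs_pow_le_factorial_mul_exp_add_exp_neg (x : ℝ) (n : ℕ) :
    |x| ^ n ≤ n.factorial * (rexp x + rexp (-x)) := by
  have h := (Real.pow_div_factorial_le_exp _ (abs_nonneg x) n).trans (Real.exp_abs_le x)
  rwa [div_le_iff₀' (by positivity)] at h

lemma integrable_pow_mul_cexp_neg_mul_sq_add (hb : 0 < b.re) (z : ℂ) (n : ℕ) :
    Integrable fun x : ℝ ↦ (x : ℂ) ^ n * cexp (-b * (x + z) ^ 2) := by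
  have tilted (s : ℝ) : Integrable fun x : ℝ ↦ cexp ((s * x : ℝ) + -b * (x + z) ^ 2) := by
    refine (integrable_cexp_quadratic hb (s - 2 * b * z) (-b * z ^ 2)).congr
      (ae_of_all _ fun x ↦ ?_)
    push_cast
    ring_nf
  refine (((tilted 1).norm.add (tilted (-1)).norm).const_mul (n.factorial : ℝ)).mono'
    (by fun_prop) (ae_of_all _ fun x ↦ ?_)
  simp only [Pi.add_apply, Complex.exp_add, norm_mul, Complex.norm_exp_ofReal, one_mul, neg_one_mul,
    norm_pow, Complex.norm_real, Real.norm_eq_abs, ← add_mul, ← mul_assoc]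
  gcongr
  exact abs_pow_le_factorial_mul_exp_add_exp_neg x n

-- The factor `x - z` is chosen so that no term linear in `x` appears in the derivative.
lemma hasDerivAt_sub_mul_cexp_neg_mul_sq_add (b z : ℂ) (x : ℝ) :
    HasDerivAt (fun x : ℝ ↦ (x - z) * cexp (-b * (x + z) ^ 2))
      ((1 + 2 * b * z ^ 2) * cexp (-b * (x + z) ^ 2)
        - 2 * b * ((x : ℂ) ^ 2 * cexp (-b * (x + z) ^ 2))) x := by
  have hx : HasDerivAt (fun x : ℝ ↦ (x : ℂ)) 1 x := Complex.ofRealCLM.hasDerivAt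
  refine ((hx.sub_const z).mul (((hx.add_const z).pow 2).const_mul (-b)).cexp).congr_deriv ?_
  simp only [Pi.pow_apply, Nat.cast_ofNat, Nat.add_one_sub_one, pow_one]
  ring

lemma integral_sq_mul_cexp_neg_mul_sq_add (hb : 0 < b.re) (z : ℂ) :
    ∫ x : ℝ, (x : ℂ) ^ 2 * cexp (-b * (x + z) ^ 2) =
      (1 / (2 * b) + z ^ 2) * (π / b) ^ (1 / 2 : ℂ) := by
  have hb0 : b ≠ 0 := by rintro rfl; simp at hb
  have int₀ := integrable_cexp_neg_mul_sq_add hb z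
  have int₁ := integrable_pow_mul_cexp_neg_mul_sq_add hb z 1
  have int₂ := integrable_pow_mul_cexp_neg_mul_sq_add hb z 2
  have int_sub : Integrable fun x : ℝ ↦ (x - z) * cexp (-b * (x + z) ^ 2) := by
    simpa only [sub_mul, pow_one] using! int₁.sub (int₀.const_mul z)
  have integral_deriv := integral_eq_zero_of_hasDerivAt_of_integrable
    (hasDerivAt_sub_mul_cexp_neg_mul_sq_add b z)
    ((int₀.const_mul _).sub (int₂.const_mul _)) int_sub
  rw [integral_sub (int₀.const_mul _) (int₂.const_mul _), integral_const_mul, integral_const_mul,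
    integral_cexp_neg_mul_sq_add hb] at integral_deriv
  rw [show 1 / (2 * b) + z ^ 2 = (1 + 2 * b * z ^ 2) / (2 * b) by field, div_mul_eq_mul_div,
    eq_div_iff (mul_ne_zero two_ne_zero hb0)]
  linear_combination -integral_deriv

lemma integrable_sq_add_sq_mul_cexp_neg_mul_sq_add (hb : 0 < b.re) (z w : ℂ) :
    Integrable fun p : ℝ × ℝ ↦ ((p.1 : ℂ) ^ 2 + (p.2 : ℂ) ^ 2) *
      (cexp (-b * (p.1 + z) ^ 2) * cexp (-b * (p.2 + w) ^ 2)) := by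
  refine (((integrable_pow_mul_cexp_neg_mul_sq_add hb z 2).mul_prod
    (integrable_cexp_neg_mul_sq_add hb w)).add ((integrable_cexp_neg_mul_sq_add hb z).mul_prod
    (integrable_pow_mul_cexp_neg_mul_sq_add hb w 2))).congr (ae_of_all _ fun p ↦ ?_)
  simp only [Pi.add_apply]
  ring

lemma integral_sq_add_sq_mul_cexp_neg_mul_sq_add (hb : 0 < b.re) (z w : ℂ) :
    ∫ p : ℝ × ℝ, ((p.1 : ℂ) ^ 2 + (p.2 : ℂ) ^ 2) *
      (cexp (-b * (p.1 + z) ^ 2) * cexp (-b * (p.2 + w) ^ 2)) =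
      π / b * (1 / b + z ^ 2 + w ^ 2) := by
  set gz : ℝ → ℂ := fun x ↦ cexp (-b * (x + z) ^ 2)
  set gw : ℝ → ℂ := fun x ↦ cexp (-b * (x + w) ^ 2)
  have sqrt_sq : ((π / b : ℂ) ^ (1 / 2 : ℂ)) ^ 2 = π / b := by
    simp only [one_div, Complex.cpow_ofNat_inv_pow]
  calc ∫ p : ℝ × ℝ, ((p.1 : ℂ) ^ 2 + (p.2 : ℂ) ^ 2) * (gz p.1 * gw p.2)
    _ = ∫ p : ℝ × ℝ, ((p.1 : ℂ) ^ 2 * gz p.1) * gw p.2 + gz p.1 * ((p.2 : ℂ) ^ 2 * gw p.2) := by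
      congr with p; ring
    _ = (∫ x : ℝ, (x : ℂ) ^ 2 * gz x) * (∫ y, gw y) +
          (∫ x, gz x) * ∫ y : ℝ, (y : ℂ) ^ 2 * gw y := by
      rw [← integral_prod_mul, ← integral_prod_mul]
      exact integral_add
        ((integrable_pow_mul_cexp_neg_mul_sq_add hb z 2).mul_prod
          (integrable_cexp_neg_mul_sq_add hb w))
        ((integrable_cexp_neg_mul_sq_add hb z).mul_prod
          (integrable_pow_mul_cexp_neg_mul_sq_add hb w 2))
    _ = ((π / b : ℂ) ^ (1 / 2 : ℂ)) ^ 2 * (1 / b + z ^ 2 + w ^ 2) := by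
      simp only [gz, gw, integral_cexp_neg_mul_sq_add hb, integral_sq_mul_cexp_neg_mul_sq_add hb]
      ring
    _ = π / b * (1 / b + z ^ 2 + w ^ 2) := by rw [sqrt_sq]

lemma norm_cexp_neg_ofReal_mul_sq_add (r : ℝ) (z : ℂ) (x : ℝ) :
    ‖cexp (-(r : ℂ) * (x + z) ^ 2)‖ = rexp (r * z.im ^ 2) * rexp (-r * (x + z.re) ^ 2) := by
  have h := GaussianFourier.norm_cexp_neg_mul_sq_add_mul_I r z.im (x + z.re)
  rw [ofReal_add, add_assoc, re_add_im] at h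
  rw [h, ← Real.exp_add, ofReal_re, ofReal_im]
  ring_nf

end GaussianMoments

section LaplaceTransform

variable {C : ℂ}

lemma integrableOn_pow_mul_cexp_neg_mul_Ioi (hC : 0 < C.re) (n : ℕ) :
    IntegrableOn (fun t : ℝ ↦ (t : ℂ) ^ n * cexp (-(C * t))) (Set.Ioi 0) := by
  have h := integrableOn_rpow_mul_exp_neg_mul_rpow (p := 1) (s := n)
    (neg_one_lt_zero.trans_le n.cast_nonneg) one_pos hC
  refine h.mono' (by fun_prop) ?_
  filter_upwards [ae_restrict_mem measurableSet_Ioi] with t (ht : 0 < t)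
  simp [Complex.norm_exp, abs_of_pos ht]

lemma hasDerivAt_pow_mul_cexp_neg_mul (C : ℂ) (n : ℕ) (t : ℝ) :
    HasDerivAt (fun t : ℝ ↦ (t : ℂ) ^ (n + 1) * cexp (-(C * t)))
      ((n + 1) * ((t : ℂ) ^ n * cexp (-(C * t)))
        - C * ((t : ℂ) ^ (n + 1) * cexp (-(C * t)))) t := by
  have ht : HasDerivAt (fun t : ℝ ↦ (t : ℂ)) 1 t := Complex.ofRealCLM.hasDerivAt
  refine ((ht.pow (n + 1)).mul (ht.const_mul C).neg.cexp).congr_deriv ?_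
  simp only [Pi.pow_apply, Pi.neg_apply, Nat.add_sub_cancel, Nat.cast_add_one]
  ring

lemma integral_pow_mul_cexp_neg_mul_Ioi (hC : 0 < C.re) (n : ℕ) :
    ∫ t : ℝ in Set.Ioi 0, (t : ℂ) ^ n * cexp (-(C * t)) = n.factorial / C ^ (n + 1) := by
  have hC0 : C ≠ 0 := by rintro rfl; simp at hC
  induction n with
  | zero =>
    simpa [div_eq_mul_inv] using integral_exp_mul_complex_Ioi (a := -C) (by simpa using hC) 0
  | succ n ih =>
    have int (m : ℕ) := integrableOn_pow_mul_cexp_neg_mul_Ioi hC m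
    have int_deriv := ((int n).const_mul (n + 1 : ℂ)).sub ((int (n + 1)).const_mul C)
    have hderiv := fun t (_ : t ∈ Set.Ici (0 : ℝ)) ↦ hasDerivAt_pow_mul_cexp_neg_mul C n t
    have lim := tendsto_zero_of_hasDerivAt_of_integrableOn_Ioi
      (fun t ht ↦ hderiv t (Set.Ioi_subset_Ici_self ht)) int_deriv (int (n + 1))
    have recurrence := integral_Ioi_of_hasDerivAt_of_tendsto' hderiv int_deriv lim
    rw [integral_sub ((int n).const_mul _) ((int (n + 1)).const_mul _), integral_const_mul,
      integral_const_mul, ih, ofReal_zero, zero_pow n.succ_ne_zero, zero_mul, sub_zero]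
      at recurrence
    rw [eq_div_iff (pow_ne_zero _ hC0), Nat.factorial_succ]
    push_cast
    field_simp at recurrence
    linear_combination -recurrence

lemma integrableOn_affine_mul_cexp_neg_mul_Ioi (hC : 0 < C.re) (α β : ℂ) :
    IntegrableOn (fun t : ℝ ↦ (α + β * t) * cexp (-(C * t))) (Set.Ioi 0) := by
  simpa [add_mul, mul_assoc] using!
    ((integrableOn_pow_mul_cexp_neg_mul_Ioi hC 0).const_mul α).add
      ((integrableOn_pow_mul_cexp_neg_mul_Ioi hC 1).const_mul β)

lemma integral_affine_mul_cexp_neg_mul_Ioi (hC : 0 < C.re) (α β : ℂ) :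
    ∫ t : ℝ in Set.Ioi 0, (α + β * t) * cexp (-(C * t)) = α / C + β / C ^ 2 := by
  have h := integral_add ((integrableOn_pow_mul_cexp_neg_mul_Ioi hC 0).const_mul α)
    ((integrableOn_pow_mul_cexp_neg_mul_Ioi hC 1).const_mul β)
  rw [integral_const_mul, integral_const_mul, integral_pow_mul_cexp_neg_mul_Ioi hC,
    integral_pow_mul_cexp_neg_mul_Ioi hC] at h
  simpa [add_mul, mul_assoc, div_eq_mul_inv] using h

end LaplaceTransform

/-- The integrand of the triple integral, with the variables in the order `t`, `y`, `x` of the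
iterated integral, outermost first. -/
noncomputable def secondMomentIntegrand (a : ℝ) (A B C : ℂ) (t y x : ℝ) : ℂ :=
  (((x ^ 2 + y ^ 2 : ℝ) : ℂ) / (t : ℂ) ^ 2) *
    cexp (-C * (t : ℂ) - ((a : ℂ) ^ 2 / (4 * (t : ℂ))) * ((x : ℂ) + (t : ℂ) * A) ^ 2
      - ((a : ℂ) ^ 2 / (4 * (t : ℂ))) * ((y : ℂ) + (t : ℂ) * B) ^ 2)

namespace secondMomentIntegrand

variable {a : ℝ} {A B C : ℂ} {t : ℝ}

lemma eq_mul_gaussian (a : ℝ) (A B C : ℂ) (t y x : ℝ) :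
    secondMomentIntegrand a A B C t y x =
      cexp (-(C * t)) / (t : ℂ) ^ 2 * (((y : ℂ) ^ 2 + (x : ℂ) ^ 2) *
        (cexp (-((a ^ 2 / (4 * t) : ℝ) : ℂ) * (y + t * B) ^ 2) *
          cexp (-((a ^ 2 / (4 * t) : ℝ) : ℂ) * (x + t * A) ^ 2))) := by
  rw [secondMomentIntegrand, sub_eq_add_neg, sub_eq_add_neg, Complex.exp_add, Complex.exp_add]
  push_cast
  simp only [neg_mul]
  ring

lemma integrable_slice (ha : a ≠ 0) (ht : 0 < t) :
    Integrable fun p : ℝ × ℝ ↦ secondMomentIntegrand a A B C t p.1 p.2 := by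
  simp_rw [eq_mul_gaussian]
  exact (integrable_sq_add_sq_mul_cexp_neg_mul_sq_add
    (by rw [ofReal_re]; positivity) _ _).const_mul _

lemma integral_slice (ha : a ≠ 0) (ht : 0 < t) :
    ∫ p : ℝ × ℝ, secondMomentIntegrand a A B C t p.1 p.2 =
      4 * π / a ^ 2 * ((4 / a ^ 2 + (A ^ 2 + B ^ 2) * t) * cexp (-(C * t))) := by
  have ha' : (a : ℂ) ≠ 0 := ofReal_ne_zero.mpr ha
  have ht' : (t : ℂ) ≠ 0 := ofReal_ne_zero.mpr ht.ne'
  simp_rw [eq_mul_gaussian]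
  rw [integral_const_mul, integral_sq_add_sq_mul_cexp_neg_mul_sq_add
    (by rw [ofReal_re]; positivity)]
  push_cast
  field

lemma ofReal_norm_eq (a : ℝ) (A B C : ℂ) (ht : t ≠ 0) (y x : ℝ) :
    (‖secondMomentIntegrand a A B C t y x‖ : ℂ) =
      secondMomentIntegrand a A.re B.re
        ((C.re - a ^ 2 / 4 * (A.im ^ 2 + B.im ^ 2) : ℝ) : ℂ) t y x := by
  have norm_sq_add_sq : ‖(y : ℂ) ^ 2 + (x : ℂ) ^ 2‖ = y ^ 2 + x ^ 2 := by
    rw [← ofReal_pow, ← ofReal_pow, ← ofReal_add, norm_real, Real.norm_of_nonneg (by positivity)]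
  have exp_growth : rexp (-(C.re * t)) * rexp (a ^ 2 / (4 * t) * (t * B.im) ^ 2) *
      rexp (a ^ 2 / (4 * t) * (t * A.im) ^ 2) =
        rexp (-((C.re - a ^ 2 / 4 * (A.im ^ 2 + B.im ^ 2)) * t)) := by
    rw [← Real.exp_add, ← Real.exp_add]
    congr 1
    field
  rw [eq_mul_gaussian, norm_mul, norm_mul, norm_mul, norm_cexp_neg_ofReal_mul_sq_add,
    norm_cexp_neg_ofReal_mul_sq_add, norm_sq_add_sq, norm_div, norm_pow, norm_real,
    Complex.norm_exp, neg_re, re_mul_ofReal, Real.norm_eq_abs, sq_abs, eq_mul_gaussian]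
  simp only [re_ofReal_mul, im_ofReal_mul]
  norm_cast
  rw [← exp_growth]
  ring

lemma integral_integral_integral (ha : a ≠ 0) (hC : 0 < C.re) :
    ∫ t in Set.Ioi (0 : ℝ), ∫ y : ℝ, ∫ x : ℝ, secondMomentIntegrand a A B C t y x =
      4 * π / (a ^ 2 * C) * (4 / a ^ 2 + (A ^ 2 + B ^ 2) / C) := by
  calc ∫ t in Set.Ioi (0 : ℝ), ∫ y : ℝ, ∫ x : ℝ, secondMomentIntegrand a A B C t y x
    _ = ∫ t : ℝ in Set.Ioi 0,
          4 * π / a ^ 2 * ((4 / a ^ 2 + (A ^ 2 + B ^ 2) * t) * cexp (-(C * t))) := by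
      refine setIntegral_congr_fun measurableSet_Ioi fun t ht ↦ ?_
      exact (integral_integral (integrable_slice ha ht)).trans (integral_slice ha ht)
    _ = 4 * π / (a ^ 2 * C) * (4 / a ^ 2 + (A ^ 2 + B ^ 2) / C) := by
      rw [integral_const_mul, integral_affine_mul_cexp_neg_mul_Ioi hC]
      ring

lemma integrableOn (ha : a ≠ 0) (hC : a ^ 2 / 4 * (A.im ^ 2 + B.im ^ 2) < C.re) :
    IntegrableOn (fun p : ℝ × ℝ × ℝ ↦ secondMomentIntegrand a A B C p.1 p.2.1 p.2.2)
      (Set.Ioi 0 ×ˢ Set.univ) := by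
  have measurable : Measurable fun p : ℝ × ℝ × ℝ ↦
      secondMomentIntegrand a A B C p.1 p.2.1 p.2.2 := by
    unfold secondMomentIntegrand
    fun_prop
  rw [IntegrableOn, Measure.volume_eq_prod, ← Measure.prod_restrict, Measure.restrict_univ,
    integrable_prod_iff measurable.aestronglyMeasurable]
  constructor
  · filter_upwards [ae_restrict_mem measurableSet_Ioi] with t ht using integrable_slice ha ht
  · refine (((integrableOn_affine_mul_cexp_neg_mul_Ioi (C := (C.re - a ^ 2 / 4 *
      (A.im ^ 2 + B.im ^ 2) : ℝ)) (by rwa [ofReal_re, sub_pos]) (4 / a ^ 2)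
      ((A.re : ℂ) ^ 2 + (B.re : ℂ) ^ 2)).const_mul (4 * π / a ^ 2 : ℂ)).re).congr ?_
    filter_upwards [ae_restrict_mem measurableSet_Ioi] with t (ht : 0 < t)
    rw [← integral_slice ha ht]
    simp_rw [← ofReal_norm_eq a A B C ht.ne']
    rw [integral_complex_ofReal]
    exact ofReal_re _

end secondMomentIntegrand

theorem gaussian_triple_integral_second_moment (a : ℝ) (ha : 0 < a) (A B C : ℂ)
    (hC : (a ^ 2 / 4) * (A.im ^ 2 + B.im ^ 2) < C.re) :
    MeasureTheory.IntegrableOn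
      (fun p : ℝ × ℝ × ℝ =>
        (((p.2.2 ^ 2 + p.2.1 ^ 2 : ℝ) : ℂ) / (p.1 : ℂ) ^ 2) *
          Complex.exp (-C * (p.1 : ℂ) - ((a : ℂ) ^ 2 / (4 * (p.1 : ℂ))) * ((p.2.2 : ℂ) + (p.1 : ℂ) * A) ^ 2
            - ((a : ℂ) ^ 2 / (4 * (p.1 : ℂ))) * ((p.2.1 : ℂ) + (p.1 : ℂ) * B) ^ 2))
      (Set.Ioi (0 : ℝ) ×ˢ (Set.univ ×ˢ Set.univ)) ∧
    (∫ t in Set.Ioi (0 : ℝ), ∫ y : ℝ, ∫ x : ℝ,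
        (((x ^ 2 + y ^ 2 : ℝ) : ℂ) / (t : ℂ) ^ 2) *
          Complex.exp (-C * (t : ℂ) - ((a : ℂ) ^ 2 / (4 * (t : ℂ))) * ((x : ℂ) + (t : ℂ) * A) ^ 2
            - ((a : ℂ) ^ 2 / (4 * (t : ℂ))) * ((y : ℂ) + (t : ℂ) * B) ^ 2)) =
      (4 * (π : ℂ) / ((a : ℂ) ^ 2 * C)) * (4 / (a : ℂ) ^ 2 + (A ^ 2 + B ^ 2) / C) ∧
    (C = 1 - ((a : ℂ) ^ 2 / 4) * (A ^ 2 + B ^ 2) →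
      (∫ t in Set.Ioi (0 : ℝ), ∫ y : ℝ, ∫ x : ℝ,
          (((x ^ 2 + y ^ 2 : ℝ) : ℂ) / (t : ℂ) ^ 2) *
            Complex.exp (-C * (t : ℂ) - ((a : ℂ) ^ 2 / (4 * (t : ℂ))) * ((x : ℂ) + (t : ℂ) * A) ^ 2
              - ((a : ℂ) ^ 2 / (4 * (t : ℂ))) * ((y : ℂ) + (t : ℂ) * B) ^ 2)) =
        16 * (π : ℂ) / ((a : ℂ) ^ 4 * C ^ 2)) := by
  have hCre : 0 < C.re := lt_of_le_of_lt (by positivity) hC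
  have hC0 : C ≠ 0 := by rintro rfl; simp at hCre
  have ha' : (a : ℂ) ≠ 0 := ofReal_ne_zero.mpr ha.ne'
  have value := secondMomentIntegrand.integral_integral_integral (A := A) (B := B) ha.ne' hCre
  refine ⟨?_, value, fun hC_eq ↦ value.trans ?_⟩
  · rw [Set.univ_prod_univ]
    exact secondMomentIntegrand.integrableOn ha.ne' hC
  · have sq_add_sq : A ^ 2 + B ^ 2 = 4 * (1 - C) / a ^ 2 := by
      rw [eq_div_iff (pow_ne_zero 2 ha')]
      linear_combination 4 * hC_eq
    rw [sq_add_sq]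
    field
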